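/- Let V be a real vector space with a nondegenerate symmetric bilinear form of signature (s₊, s₋) with s₊ ≥ 3 and s₋ ≥ 1, let L ⊂ V be a lattice (full-rank ℤ-submodule on which the form is integral), Γ a finite-index subgroup of O(L), and l ∈ L a nonzero vector. Then the union over γ ∈ Γ of the sets Gr₊₊((γl)^⊥) is dense in Gr₊₊(V), the Grassmannian of positive-definite 2-planes in V. -/

import Mathlib

open Matrix

variable {n : ℕ}


/-- The real bilinear form on `ℝⁿ` with Gram matrix `B`. -/
def qForm (B : Matrix (Fin n) (Fin n) ℝ) (x y : Fin n → ℝ) : ℝ :=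
  x ⬝ᵥ B.mulVec y

/-- The real vector associated to an integer vector. -/
def intVec (v : Fin n → ℤ) : Fin n → ℝ := fun i => (v i : ℝ)

/-- A pair of vectors spans a positive 2-plane: the form is positive on every
nonzero linear combination (this forces linear independence). -/
def SpansPosPlane (B : Matrix (Fin n) (Fin n) ℝ) (p : (Fin n → ℝ) × (Fin n → ℝ)) :
    Prop :=
  ∀ a b : ℝ, ¬(a = 0 ∧ b = 0) →
    0 < qForm B (a • p.1 + b • p.2) (a • p.1 + b • p.2)



/-! ### Basic properties of the form -/

section basic

variable (B : Matrix (Fin n) (Fin n) ℝ)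

theorem q_add_l (x y z : Fin n → ℝ) : qForm B (x + y) z = qForm B x z + qForm B y z := by
  simp [qForm, add_dotProduct]

theorem q_add_r (x y z : Fin n → ℝ) : qForm B x (y + z) = qForm B x y + qForm B x z := by
  simp [qForm, mulVec_add, dotProduct_add]

theorem q_smul_l (c : ℝ) (x y : Fin n → ℝ) : qForm B (c • x) y = c * qForm B x y := by
  simp [qForm]

theorem q_smul_r (c : ℝ) (x y : Fin n → ℝ) : qForm B x (c • y) = c * qForm B x y := by
  simp [qForm, mulVec_smul]

theorem q_sub_l (x y z : Fin n → ℝ) : qForm B (x - y) z = qForm B x z - qForm B y z := by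
  simp [qForm, sub_dotProduct]

theorem q_sub_r (x y z : Fin n → ℝ) : qForm B x (y - z) = qForm B x y - qForm B x z := by
  simp [qForm, mulVec_sub, dotProduct_sub]

theorem q_zero_l (y : Fin n → ℝ) : qForm B 0 y = 0 := by simp [qForm]

theorem q_zero_r (y : Fin n → ℝ) : qForm B y 0 = 0 := by simp [qForm]

variable {B}

theorem q_comm (hB : B.IsSymm) (x y : Fin n → ℝ) : qForm B x y = qForm B y x := by
  unfold qForm
  rw [dotProduct_mulVec, ← mulVec_transpose, hB.eq, dotProduct_comm]

theorem q_cont {X : Type*} [TopologicalSpace X] {f g : X → Fin n → ℝ} (hf : Continuous f)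
    (hg : Continuous g) : Continuous fun p => qForm B (f p) (g p) := by
  unfold qForm
  exact hf.dotProduct (continuous_const.matrix_mulVec hg)

theorem q_nondeg (hB : B.IsSymm) (hdet : B.det ≠ 0) {x : Fin n → ℝ} (hx : x ≠ 0) :
    ∃ w, qForm B x w = 1 := by
  have h : B *ᵥ x ≠ 0 := fun h => hx (eq_zero_of_mulVec_eq_zero hdet h)
  obtain ⟨i, hi⟩ := Function.ne_iff.1 h
  simp only [Pi.zero_apply] at hi
  refine ⟨Pi.single i ((B *ᵥ x) i)⁻¹, ?_⟩
  rw [q_comm hB, qForm, single_dotProduct]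
  field_simp

/-- Perturbing an isotropic vector away from a hyperplane. -/
theorem perturb_one (hB : B.IsSymm) (hdet : B.det ≠ 0)
    (hP : ∀ x : Fin n → ℝ, ∃ u, qForm B u x = 0 ∧ 0 < qForm B u u)
    {x a : Fin n → ℝ} (hx0 : x ≠ 0) (hx : qForm B x x = 0) (ha : a ≠ 0) :
    x ∈ closure {y | qForm B y y = 0 ∧ qForm B y a ≠ 0} := by
  by_cases hxa : qForm B x a = 0
  swap
  · exact subset_closure ⟨hx, hxa⟩
  obtain ⟨v, hv, hv0⟩ := hP x
  obtain ⟨w, hw1, hw2⟩ : ∃ w, qForm B x w ≠ 0 ∧ qForm B a w ≠ 0 := by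
    obtain ⟨w1, h1⟩ := q_nondeg hB hdet hx0
    obtain ⟨w2, h2⟩ := q_nondeg hB hdet ha
    by_cases h3 : qForm B a w1 = 0
    · by_cases h4 : qForm B x w2 = 0
      · exact ⟨w1 + w2, by simp [q_add_r, h1, h4], by simp [q_add_r, h2, h3]⟩
      · exact ⟨w2, h4, by simp [h2]⟩
    · exact ⟨w1, by simp [h1], h3⟩
  let V : ℝ → Fin n → ℝ := fun s => v + s • w
  have hV : Continuous V := by fun_prop
  have hqV : Continuous fun s => qForm B (V s) (V s) := q_cont hV hV
  let Y : ℝ → Fin n → ℝ := fun s => x - (2 * s * qForm B x w / qForm B (V s) (V s)) • V s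
  have hV0 : qForm B (V 0) (V 0) ≠ 0 := by simp [V, hv0.ne']
  have hY : ContinuousAt Y 0 := by
    have : ContinuousAt (fun s => qForm B (V s) (V s)) 0 := hqV.continuousAt
    have h2 : ContinuousAt V 0 := hV.continuousAt
    exact continuousAt_const.sub
      (((continuousAt_const.mul continuousAt_id).mul continuousAt_const).div this hV0 |>.smul h2)
  have hY0 : Y 0 = x := by simp [Y]
  have hYt : Filter.Tendsto Y (nhdsWithin 0 {0}ᶜ) (nhds x) := by
    have := hY.tendsto
    rw [hY0] at this
    exact this.mono_left nhdsWithin_le_nhds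
  refine mem_closure_of_tendsto hYt ?_
  have e1 : ∀ᶠ s in nhdsWithin (0:ℝ) {0}ᶜ, qForm B (V s) (V s) ≠ 0 :=
    (hqV.continuousAt.eventually_ne hV0).filter_mono nhdsWithin_le_nhds
  have e2 : ∀ᶠ s in nhdsWithin (0:ℝ) {0}ᶜ, s ≠ 0 := eventually_mem_nhdsWithin
  have e3 : ∀ᶠ s in nhdsWithin (0:ℝ) {0}ᶜ, qForm B v a + s * qForm B a w ≠ 0 := by
    by_cases h : qForm B v a = 0
    · filter_upwards [e2] with s hs
      simp [h, hs, hw2]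
    · have : ContinuousAt (fun s : ℝ => qForm B v a + s * qForm B a w) 0 := by fun_prop
      exact (this.eventually_ne (by simpa using h)).filter_mono nhdsWithin_le_nhds
  filter_upwards [e1, e2, e3] with s h1 h2 h3
  have hxv : qForm B x v = 0 := by rw [q_comm hB]; exact hv
  have hxV : qForm B x (V s) = s * qForm B x w := by simp [V, q_add_r, q_smul_r, hxv]
  have hVx : qForm B (V s) x = s * qForm B x w := by rw [q_comm hB, hxV]
  have hVa : qForm B (V s) a = qForm B v a + s * qForm B a w := by
    simp [V, q_add_l, q_smul_l, q_comm hB w a]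
  constructor
  · simp only [Y, q_sub_l, q_sub_r, q_smul_l, q_smul_r, hxV, hVx, hx]
    field_simp
    ring
  · simp only [Y, q_sub_l, q_smul_l, hxa, hVa]
    rw [zero_sub, neg_ne_zero]
    exact mul_ne_zero (div_ne_zero (mul_ne_zero (mul_ne_zero two_ne_zero h2) hw1) h1) h3

theorem perturb_two (hB : B.IsSymm) (hdet : B.det ≠ 0)
    (hP : ∀ x : Fin n → ℝ, ∃ u, qForm B u x = 0 ∧ 0 < qForm B u u)
    {x a b : Fin n → ℝ} (hx0 : x ≠ 0) (hx : qForm B x x = 0) (ha : a ≠ 0) (hb : b ≠ 0) :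
    x ∈ closure {y | qForm B y y = 0 ∧ qForm B y a ≠ 0 ∧ qForm B y b ≠ 0} := by
  have h1 := perturb_one hB hdet hP hx0 hx ha
  refine closure_minimal ?_ isClosed_closure h1
  rintro y ⟨hy, hya⟩
  have hy0 : y ≠ 0 := by
    rintro rfl
    exact hya (q_zero_l B a)
  have h2 := perturb_one hB hdet hP hy0 hy hb
  have ho : IsOpen {y : Fin n → ℝ | qForm B y a ≠ 0} :=
    isOpen_ne_fun (q_cont continuous_id continuous_const) continuous_const
  refine closure_mono ?_ (ho.inter_closure ⟨hya, h2⟩)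
  rintro z ⟨h1, h2, h3⟩
  exact ⟨h2, h1, h3⟩

theorem isotropic_of_pos_neg (hB : B.IsSymm) {p m : Fin n → ℝ} (hp : 0 < qForm B p p)
    (hm : qForm B m m < 0) : ∃ s : ℝ, qForm B (p + s • m) (p + s • m) = 0 ∧ p + s • m ≠ 0 := by
  have hd : 0 ≤ qForm B p m ^ 2 - qForm B p p * qForm B m m := by nlinarith [sq_nonneg (qForm B p m)]
  have hs := Real.sq_sqrt hd
  set r := Real.sqrt (qForm B p m ^ 2 - qForm B p p * qForm B m m)
  refine ⟨(-qForm B p m + r) / qForm B m m, ?_, ?_⟩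
  · simp only [q_add_l, q_add_r, q_smul_l, q_smul_r, q_comm hB m p]
    have := hm.ne
    field_simp
    linear_combination hs
  · intro h
    have : p = -(((-qForm B p m + r) / qForm B m m) • m) := eq_neg_of_add_eq_zero_left h
    rw [this, ← neg_smul, q_smul_l, q_smul_r] at hp
    nlinarith [sq_nonneg (-((-qForm B p m + r) / qForm B m m))]

theorem spansPosPlane_iff (hB : B.IsSymm) (p : (Fin n → ℝ) × (Fin n → ℝ)) :
    SpansPosPlane B p ↔ 0 < qForm B p.1 p.1 ∧
      0 < qForm B p.1 p.1 * qForm B p.2 p.2 - qForm B p.1 p.2 ^ 2 := by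
  have key : ∀ a b : ℝ, qForm B (a • p.1 + b • p.2) (a • p.1 + b • p.2) =
      a ^ 2 * qForm B p.1 p.1 + 2 * a * b * qForm B p.1 p.2 + b ^ 2 * qForm B p.2 p.2 := by
    intro a b
    simp only [q_add_l, q_add_r, q_smul_l, q_smul_r, q_comm hB p.2 p.1]
    ring
  unfold SpansPosPlane
  simp only [key]
  constructor
  · intro h
    have h1 := h 1 0 (by simp)
    have h2 := h (-qForm B p.1 p.2) (qForm B p.1 p.1) (by
      rintro ⟨-, h0⟩
      simp [h0] at h1)
    have h1' : 0 < qForm B p.1 p.1 := by simpa using h1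
    refine ⟨h1', ?_⟩
    by_contra hc
    nlinarith
  · rintro ⟨h1, h2⟩ a b hab
    have : 0 < qForm B p.1 p.1 * (a ^ 2 * qForm B p.1 p.1 + 2 * a * b * qForm B p.1 p.2 +
        b ^ 2 * qForm B p.2 p.2) := by
      have e : qForm B p.1 p.1 * (a ^ 2 * qForm B p.1 p.1 + 2 * a * b * qForm B p.1 p.2 +
        b ^ 2 * qForm B p.2 p.2) = (a * qForm B p.1 p.1 + b * qForm B p.1 p.2) ^ 2 +
          b ^ 2 * (qForm B p.1 p.1 * qForm B p.2 p.2 - qForm B p.1 p.2 ^ 2) := by ring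
      rw [e]
      by_cases hb : b = 0
      · have ha : a ≠ 0 := fun ha => hab ⟨ha, hb⟩
        subst hb
        have : a * qForm B p.1 p.1 ≠ 0 := mul_ne_zero ha h1.ne'
        have := pow_pos (abs_pos.2 this) 2
        rw [sq_abs] at this
        simpa using this
      · have : 0 < b ^ 2 := by positivity
        have := mul_pos this h2
        nlinarith [sq_nonneg (a * qForm B p.1 p.1 + b * qForm B p.1 p.2)]
    exact (mul_pos_iff_of_pos_left h1).1 this

theorem isOpen_spansPosPlane (hB : B.IsSymm) : IsOpen {p | SpansPosPlane B p} := by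
  simp only [spansPosPlane_iff hB]
  have h11 : Continuous fun p : (Fin n → ℝ) × (Fin n → ℝ) => qForm B p.1 p.1 :=
    q_cont continuous_fst continuous_fst
  have h12 : Continuous fun p : (Fin n → ℝ) × (Fin n → ℝ) => qForm B p.1 p.2 :=
    q_cont continuous_fst continuous_snd
  have h22 : Continuous fun p : (Fin n → ℝ) × (Fin n → ℝ) => qForm B p.2 p.2 :=
    q_cont continuous_snd continuous_snd
  exact (isOpen_lt continuous_const h11).inter
    (isOpen_lt continuous_const ((h11.mul h22).sub (h12.pow 2)))

/-- A positive plane has a nonzero isotropic vector in its orthogonal complement. -/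
theorem exists_isotropic_perp (hB : B.IsSymm)
    (hP2 : ∀ x y : Fin n → ℝ, ∃ u, qForm B u x = 0 ∧ qForm B u y = 0 ∧ 0 < qForm B u u)
    {w : Fin n → ℝ} (hw : qForm B w w < 0)
    (p : (Fin n → ℝ) × (Fin n → ℝ)) (hp : SpansPosPlane B p) :
    ∃ x, x ≠ 0 ∧ qForm B x x = 0 ∧ qForm B p.1 x = 0 ∧ qForm B p.2 x = 0 := by
  obtain ⟨h1, h2⟩ := (spansPosPlane_iff hB p).1 hp
  obtain ⟨u, v⟩ := p
  simp only at h1 h2 ⊢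
  obtain ⟨z, hz1, hz2, hz⟩ := hP2 u v
  set α := qForm B u u
  set β := qForm B u v
  set δ := qForm B v v
  have hvu : qForm B v u = β := q_comm hB _ _
  let v' := v - (β / α) • u
  have huv' : qForm B u v' = 0 := by
    simp only [v', q_sub_r, q_smul_r]
    change β - β / α * α = 0
    field_simp
    ring
  have hvvpos : 0 < qForm B v' v' := by
    have : qForm B v' v' = (α * δ - β ^ 2) / α := by
      simp only [v', q_sub_l, q_sub_r, q_smul_l, q_smul_r, hvu]
      change δ - β / α * β - β / α * (β - β / α * α) = _
      field_simp
      ring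
    rw [this]
    positivity
  let m := w - (qForm B w u / α) • u - (qForm B w v' / qForm B v' v') • v'
  have hv'u : qForm B v' u = 0 := by rw [q_comm hB, huv']
  have hmu : qForm B u m = 0 := by
    simp only [m, q_sub_r, q_smul_r, huv', q_comm hB u w]
    change _ - qForm B w u / α * α - _ = 0
    field_simp
    ring
  have hmv' : qForm B v' m = 0 := by
    simp only [m, q_sub_r, q_smul_r, hv'u, q_comm hB v' w]
    have := hvvpos.ne'
    field_simp
    ring
  have hmv : qForm B v m = 0 := by
    have : v = v' + (β / α) • u := by simp [v']
    rw [this, q_add_l, q_smul_l, hmv', hmu]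
    simp
  have hmm : qForm B m m < 0 := by
    have e : qForm B m m = qForm B w m := by
      conv_lhs => simp only [m, q_sub_l, q_smul_l]
      change qForm B w m - _ * qForm B u m - _ * qForm B v' m = _
      rw [hmu, hmv']; ring
    have e2 : qForm B w m = qForm B w w - qForm B w u ^ 2 / α -
        qForm B w v' ^ 2 / qForm B v' v' := by
      simp only [m, q_sub_r, q_smul_r]; ring
    have : 0 ≤ qForm B w u ^ 2 / α := by positivity
    have : 0 ≤ qForm B w v' ^ 2 / qForm B v' v' := by positivity
    linarith
  obtain ⟨s, hs, hs0⟩ := isotropic_of_pos_neg hB hz hmm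
  refine ⟨_, hs0, hs, ?_, ?_⟩
  · rw [q_add_r, q_smul_r, hmu, q_comm hB, hz1]; simp
  · rw [q_add_r, q_smul_r, hmv, q_comm hB, hz2]; simp

/-- Final step: an isotropic vector orthogonal to the plane that is a limit of multiples of
vectors from a set gives the approximation. -/
theorem approx_plane (hB : B.IsSymm) (hdet : B.det ≠ 0) (S : Set (Fin n → ℝ))
    (p : (Fin n → ℝ) × (Fin n → ℝ)) (hp : SpansPosPlane B p) {x : Fin n → ℝ} (hx0 : x ≠ 0)
    (h1 : qForm B p.1 x = 0) (h2 : qForm B p.2 x = 0) (hx : x ∈ closure S) :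
    p ∈ closure {p' | SpansPosPlane B p' ∧ ∃ y ∈ S, y ≠ 0 ∧ qForm B p'.1 y = 0 ∧
      qForm B p'.2 y = 0} := by
  obtain ⟨z, hz⟩ := q_nondeg hB hdet hx0
  obtain ⟨y, hyS, hy⟩ := mem_closure_iff_seq_limit.1 hx
  let f : (Fin n → ℝ) → (Fin n → ℝ) × (Fin n → ℝ) := fun y =>
    (p.1 - (qForm B p.1 y / qForm B y z) • z, p.2 - (qForm B p.2 y / qForm B y z) • z)
  have hcz : ContinuousAt (fun y => qForm B y z) x :=
    (q_cont continuous_id continuous_const).continuousAt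
  have hc1 : ContinuousAt (fun y => qForm B p.1 y) x :=
    (q_cont continuous_const continuous_id).continuousAt
  have hc2 : ContinuousAt (fun y => qForm B p.2 y) x :=
    (q_cont continuous_const continuous_id).continuousAt
  have hz0 : qForm B x z ≠ 0 := by simp [hz]
  have hf : ContinuousAt f x :=
    (continuousAt_const.sub ((hc1.div hcz hz0).smul continuousAt_const)).prodMk
      (continuousAt_const.sub ((hc2.div hcz hz0).smul continuousAt_const))
  have hfx : f x = p := by simp [f, h1, h2]
  have hft : Filter.Tendsto (fun k => f (y k)) Filter.atTop (nhds p) := by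
    have := hf.tendsto.comp hy
    rwa [hfx] at this
  refine mem_closure_of_tendsto hft ?_
  filter_upwards [hft.eventually ((isOpen_spansPosPlane hB).mem_nhds hp),
    hy.eventually (hcz.eventually_ne hz0)] with k hk1 hk2
  refine ⟨hk1, y k, hyS k, ?_, ?_, ?_⟩
  · rintro h
    rw [h] at hk2
    exact hk2 (q_zero_l B z)
  · simp only [f, q_sub_l, q_smul_l, q_comm hB z (y k)]
    field_simp
    ring
  · simp only [f, q_sub_l, q_smul_l, q_comm hB z (y k)]
    field_simp
    ring

end basic


/-! ### Integer matrices preserving the form, and a pigeonhole argument -/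

/-- The real matrix of an integer matrix. -/
def rm (P : Matrix (Fin n) (Fin n) ℤ) : Matrix (Fin n) (Fin n) ℝ := P.map (Int.cast : ℤ → ℝ)

theorem rm_mul (P Q : Matrix (Fin n) (Fin n) ℤ) : rm (P * Q) = rm P * rm Q :=
  Matrix.map_mul (f := Int.castRingHom ℝ)

theorem rm_one : rm (1 : Matrix (Fin n) (Fin n) ℤ) = 1 := by
  simp [rm]

theorem rm_inj {P Q : Matrix (Fin n) (Fin n) ℤ} (h : rm P = rm Q) : P = Q := by
  ext i j
  have := congrFun (congrFun h i) j
  simpa [rm] using this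

theorem rm_det (P : Matrix (Fin n) (Fin n) ℤ) : (rm P).det = (P.det : ℝ) :=
  ((Int.castRingHom ℝ).map_det P).symm

theorem rm_transpose (P : Matrix (Fin n) (Fin n) ℤ) : rm Pᵀ = (rm P)ᵀ := rfl

theorem rm_intVec (P : Matrix (Fin n) (Fin n) ℤ) (v : Fin n → ℤ) :
    intVec (P *ᵥ v) = rm P *ᵥ intVec v := by
  ext i
  simp [intVec, rm, mulVec, dotProduct]

section pigeon

variable {B : Matrix (Fin n) (Fin n) ℝ}

theorem q_mulVec (M : Matrix (Fin n) (Fin n) ℝ) (v w : Fin n → ℝ) :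
    qForm B (M *ᵥ v) (M *ᵥ w) = qForm (Mᵀ * B * M) v w := by
  simp only [qForm, ← mulVec_mulVec]
  rw [mulVec_transpose, dotProduct_comm v, ← dotProduct_mulVec, dotProduct_comm]

theorem form_ext {A C : Matrix (Fin n) (Fin n) ℝ} (h : ∀ v w, qForm A v w = qForm C v w) :
    A = C := by
  ext i j
  have := h (Pi.single i 1) (Pi.single j 1)
  simpa [qForm] using this

theorem det_sq_of_pres (hdet : B.det ≠ 0) {M : Matrix (Fin n) (Fin n) ℝ}
    (h : Mᵀ * B * M = B) : M.det ^ 2 = 1 := by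
  have := congrArg Matrix.det h
  rw [det_mul, det_mul, det_transpose] at this
  have h2 : (M.det ^ 2 - 1) * B.det = 0 := by linear_combination this
  rcases mul_eq_zero.1 h2 with h3 | h3
  · linarith
  · exact absurd h3 hdet

theorem unit_of_pres (hdet : B.det ≠ 0) {P : Matrix (Fin n) (Fin n) ℤ}
    (h : (rm P)ᵀ * B * rm P = B) :
    ∃ u : (Matrix (Fin n) (Fin n) ℤ)ˣ, (u : Matrix (Fin n) (Fin n) ℤ) = P := by
  have h1 := det_sq_of_pres hdet h
  rw [rm_det] at h1
  have h2 : P.det * P.det = 1 := by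
    have : P.det ^ 2 = 1 := by exact_mod_cast h1
    linarith
  have h3 : IsUnit P.det := IsUnit.of_mul_eq_one _ h2
  exact (Matrix.isUnit_iff_isUnit_det P).2 h3

theorem ultra_const {α : Type*} [Finite α] (U : Ultrafilter ℕ) (f : ℕ → α) :
    ∃ a, ∀ᶠ k in (U : Filter ℕ), f k = a := by
  obtain ⟨a, ha⟩ := Ultrafilter.eq_pure_of_finite (U.map f)
  refine ⟨a, ?_⟩
  have : ({a} : Set α) ∈ U.map f := by rw [ha]; simp
  exact this

theorem coset_pigeon (hdet : B.det ≠ 0) (O Γ : Subgroup (Matrix (Fin n) (Fin n) ℤ)ˣ)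
    (hO : ∀ P : (Matrix (Fin n) (Fin n) ℤ)ˣ, P ∈ O ↔
      (rm (P : Matrix (Fin n) (Fin n) ℤ))ᵀ * B * (rm (P : Matrix (Fin n) (Fin n) ℤ)) = B)
    (hfin : (Γ.subgroupOf O).index ≠ 0)
    (U : Ultrafilter ℕ) (P : ℕ → Matrix (Fin n) (Fin n) ℤ)
    (hP : ∀ᶠ k in (U : Filter ℕ), (rm (P k))ᵀ * B * rm (P k) = B) :
    ∃ s, (rm (P s))ᵀ * B * rm (P s) = B ∧ ∀ᶠ k in (U : Filter ℕ),
      ∃ γ ∈ Γ, (γ : Matrix (Fin n) (Fin n) ℤ) * P s = P k := by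
  have h1 : ∀ k, ∃ u : O, (rm (P k))ᵀ * B * rm (P k) = B →
      ((u : (Matrix (Fin n) (Fin n) ℤ)ˣ) : Matrix (Fin n) (Fin n) ℤ) = P k := by
    intro k
    by_cases h : (rm (P k))ᵀ * B * rm (P k) = B
    · obtain ⟨u, hu⟩ := unit_of_pres hdet h
      exact ⟨⟨u, (hO u).2 (by rw [hu]; exact h)⟩, fun _ => hu⟩
    · exact ⟨1, fun h' => absurd h' h⟩
  choose u hu using h1
  have : (Γ.subgroupOf O).FiniteIndex := ⟨hfin⟩
  have : Finite (O ⧸ Γ.subgroupOf O) := Subgroup.finite_quotient_of_finiteIndex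
  obtain ⟨a, ha⟩ := ultra_const U (fun k => (QuotientGroup.mk (u k)⁻¹ : O ⧸ Γ.subgroupOf O))
  obtain ⟨s, hs1, hs2⟩ := (hP.and ha).exists
  refine ⟨s, hs1, ?_⟩
  filter_upwards [hP, ha] with k hk1 hk2
  have h3 : (QuotientGroup.mk (u k)⁻¹ : O ⧸ Γ.subgroupOf O) = QuotientGroup.mk (u s)⁻¹ :=
    hk2.trans hs2.symm
  rw [QuotientGroup.eq, Subgroup.mem_subgroupOf] at h3
  refine ⟨_, h3, ?_⟩
  rw [← hu s hs1, ← hu k hk1, ← Units.val_mul]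
  simp

/-- Multiples of vectors in the orbit of `y`. -/
def orb (Γ : Subgroup (Matrix (Fin n) (Fin n) ℤ)ˣ) (y : Fin n → ℝ) : Set (Fin n → ℝ) :=
  {z | ∃ c : ℝ, ∃ γ ∈ Γ, z = c • (rm (γ : Matrix (Fin n) (Fin n) ℤ) *ᵥ y)}

theorem closure_orb_smul {Γ : Subgroup (Matrix (Fin n) (Fin n) ℤ)ˣ} {y x : Fin n → ℝ}
    (hx : x ∈ closure (orb Γ y)) (c : ℝ) : c • x ∈ closure (orb Γ y) := by
  refine map_mem_closure (continuous_const_smul c) hx ?_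
  rintro _ ⟨d, γ, hγ, rfl⟩
  exact ⟨c * d, γ, hγ, by rw [mul_smul]⟩

theorem orb_mul {Γ : Subgroup (Matrix (Fin n) (Fin n) ℤ)ˣ} {y : Fin n → ℝ}
    {δ : (Matrix (Fin n) (Fin n) ℤ)ˣ} (hδ : δ ∈ Γ) :
    orb Γ (rm (δ : Matrix (Fin n) (Fin n) ℤ) *ᵥ y) ⊆ orb Γ y := by
  rintro _ ⟨d, γ, hγ, rfl⟩
  exact ⟨d, γ * δ, Γ.mul_mem hγ hδ, by rw [Units.val_mul, rm_mul, mulVec_mulVec]⟩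

theorem key_limit (hdet : B.det ≠ 0) (O Γ : Subgroup (Matrix (Fin n) (Fin n) ℤ)ˣ)
    (hO : ∀ P : (Matrix (Fin n) (Fin n) ℤ)ˣ, P ∈ O ↔
      (rm (P : Matrix (Fin n) (Fin n) ℤ))ᵀ * B * (rm (P : Matrix (Fin n) (Fin n) ℤ)) = B)
    (hfin : (Γ.subgroupOf O).index ≠ 0)
    (U : Ultrafilter ℕ) (P : ℕ → Matrix (Fin n) (Fin n) ℤ)
    (hP : ∀ᶠ k in (U : Filter ℕ), (rm (P k))ᵀ * B * rm (P k) = B)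
    (c : ℕ → ℝ) (x φ : Fin n → ℝ)
    (hlim : ∀ y, Filter.Tendsto (fun k => c k • (rm (P k) *ᵥ y)) U (nhds ((φ ⬝ᵥ y) • x))) :
    ∃ s, (rm (P s))ᵀ * B * rm (P s) = B ∧
      ∀ y, φ ⬝ᵥ y ≠ 0 → x ∈ closure (orb Γ (rm (P s) *ᵥ y)) := by
  obtain ⟨s, hs, h⟩ := coset_pigeon hdet O Γ hO hfin U P hP
  refine ⟨s, hs, fun y hy => ?_⟩
  have h1 : (φ ⬝ᵥ y) • x ∈ closure (orb Γ (rm (P s) *ᵥ y)) := by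
    refine mem_closure_of_tendsto (hlim y) ?_
    filter_upwards [h] with k hk
    obtain ⟨γ, hγ, hk⟩ := hk
    exact ⟨c k, γ, hγ, by rw [← hk, rm_mul, mulVec_mulVec]⟩
  have := closure_orb_smul h1 (φ ⬝ᵥ y)⁻¹
  rwa [smul_smul, inv_mul_cancel₀ hy, one_smul] at this

end pigeon


/-! ### The case where the lattice contains an isotropic vector -/

theorem rat_clear (r : Fin n → ℚ) : ∃ D : ℤ, D ≠ 0 ∧ ∃ z : Fin n → ℤ, ∀ i, (D : ℚ) * r i = z i := by
  obtain ⟨b, hb⟩ := IsLocalization.exist_integer_multiples_of_finite (nonZeroDivisors ℤ) r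
  refine ⟨b, nonZeroDivisors.coe_ne_zero b, ?_⟩
  choose z hz using hb
  refine ⟨z, fun i => ?_⟩
  have := hz i
  simp only [algebraMap_int_eq, eq_intCast] at this
  rw [this]
  simp

theorem int_dense (v : Fin n → ℝ) :
    v ∈ closure {v : Fin n → ℝ | ∃ c : ℝ, ∃ z : Fin n → ℤ, v = c • intVec z} := by
  have h : DenseRange (fun (r : Fin n → ℚ) (i : Fin n) => (r i : ℝ)) :=
    DenseRange.piMap (fun _ => Rat.denseRange_cast)
  refine closure_mono ?_ (h v)
  rintro _ ⟨r, rfl⟩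
  obtain ⟨D, hD, z, hz⟩ := rat_clear r
  refine ⟨(D : ℝ)⁻¹, z, ?_⟩
  ext i
  have h1 : (D : ℝ) * r i = z i := by exact_mod_cast hz i
  have hD' : (D : ℝ) ≠ 0 := by exact_mod_cast hD
  simp only [Pi.smul_apply, intVec, smul_eq_mul]
  rw [← h1]
  field_simp

/-- The integral form. -/
def qZ (B0 : Matrix (Fin n) (Fin n) ℤ) (x y : Fin n → ℤ) : ℤ := x ⬝ᵥ B0 *ᵥ y

theorem qZ_cast (B0 : Matrix (Fin n) (Fin n) ℤ) (x y : Fin n → ℤ) :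
    ((qZ B0 x y : ℤ) : ℝ) = qForm (rm B0) (intVec x) (intVec y) := by
  unfold qZ qForm
  rw [← rm_intVec]
  simp [dotProduct, intVec]

theorem intVec_ne {z : Fin n → ℤ} (h : z ≠ 0) : intVec z ≠ 0 := by
  intro h'
  apply h
  ext i
  have := congrFun h' i
  simpa [intVec] using this

/-- Integral transvection. -/
def trv (B0 : Matrix (Fin n) (Fin n) ℤ) (e f : Fin n → ℤ) (h k : ℤ) : Matrix (Fin n) (Fin n) ℤ :=
  1 + k • (vecMulVec f (B0 *ᵥ e) - vecMulVec e (B0 *ᵥ f)) - (k ^ 2 * h) • vecMulVec e (B0 *ᵥ e)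

theorem trv_apply {B0 : Matrix (Fin n) (Fin n) ℤ} (hB : (rm B0).IsSymm) (e f : Fin n → ℤ)
    (h k : ℤ) (v : Fin n → ℝ) :
    rm (trv B0 e f h k) *ᵥ v = v + (k : ℝ) • (qForm (rm B0) (intVec e) v • intVec f -
      qForm (rm B0) (intVec f) v • intVec e) -
      ((k : ℝ) ^ 2 * h * qForm (rm B0) (intVec e) v) • intVec e := by
  have h1 : rm (trv B0 e f h k) = 1 + (k : ℝ) • (vecMulVec (intVec f) (rm B0 *ᵥ intVec e) -
      vecMulVec (intVec e) (rm B0 *ᵥ intVec f)) -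
      ((k : ℝ) ^ 2 * h) • vecMulVec (intVec e) (rm B0 *ᵥ intVec e) := by
    rw [← rm_intVec, ← rm_intVec]
    ext i j
    simp [rm, trv, vecMulVec_apply, intVec, Matrix.one_apply, -zsmul_eq_mul]
  have h2 : ∀ a b : Fin n → ℝ, vecMulVec a (rm B0 *ᵥ b) *ᵥ v = qForm (rm B0) b v • a := by
    intro a b
    rw [vecMulVec_mulVec, dotProduct_comm, q_comm hB]
    simp [qForm]
  rw [h1, sub_mulVec, add_mulVec, smul_mulVec, smul_mulVec, sub_mulVec, h2, h2, h2, one_mulVec,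
    smul_smul]

theorem isotropic_int_limit {B0 : Matrix (Fin n) (Fin n) ℤ} (hB : (rm B0).IsSymm)
    (hdet : (rm B0).det ≠ 0)
    (hP : ∀ x : Fin n → ℝ, ∃ u, qForm (rm B0) u x = 0 ∧ 0 < qForm (rm B0) u u)
    (O Γ : Subgroup (Matrix (Fin n) (Fin n) ℤ)ˣ)
    (hO : ∀ P : (Matrix (Fin n) (Fin n) ℤ)ˣ, P ∈ O ↔
      (rm (P : Matrix (Fin n) (Fin n) ℤ))ᵀ * (rm B0) * (rm (P : Matrix (Fin n) (Fin n) ℤ)) = rm B0)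
    (hfin : (Γ.subgroupOf O).index ≠ 0)
    (l : Fin n → ℝ) (e : Fin n → ℤ)
    (he : qForm (rm B0) (intVec e) (intVec e) = 0) (hel : qForm (rm B0) (intVec e) l ≠ 0) :
    intVec e ∈ closure (orb Γ l) := by
  set B := rm B0 with hBdef
  have he0 : intVec e ≠ 0 := fun h => hel (by rw [h, q_zero_l])
  -- an integral vector orthogonal to `e` with nonzero square
  obtain ⟨f, hef, hff⟩ : ∃ f : Fin n → ℤ, qForm B (intVec e) (intVec f) = 0 ∧
      qForm B (intVec f) (intVec f) ≠ 0 := by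
    obtain ⟨w, hw⟩ : ∃ w : Fin n → ℤ, qForm B (intVec w) (intVec e) ≠ 0 := by
      have h0 : B *ᵥ intVec e ≠ 0 := fun h => he0 (eq_zero_of_mulVec_eq_zero hdet h)
      obtain ⟨i, hi⟩ := Function.ne_iff.1 h0
      refine ⟨Pi.single i 1, ?_⟩
      have : intVec (Pi.single i 1 : Fin n → ℤ) = Pi.single i 1 := by
        ext j
        by_cases hj : j = i
        · subst hj; simp [intVec]
        · simp [intVec, hj]
      rw [this, qForm, single_dotProduct]
      simpa using hi
    let G : (Fin n → ℝ) → (Fin n → ℝ) := fun v =>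
      qForm B (intVec w) (intVec e) • v - qForm B v (intVec e) • intVec w
    have hG : Continuous G := by
      have : Continuous fun v : Fin n → ℝ => qForm B v (intVec e) :=
        q_cont continuous_id continuous_const
      fun_prop
    obtain ⟨u, hu1, hu2⟩ := hP (intVec e)
    have ho : IsOpen {v | qForm B (G v) (G v) ≠ 0} :=
      isOpen_ne_fun (q_cont hG hG) continuous_const
    have hu : u ∈ {v | qForm B (G v) (G v) ≠ 0} := by
      simp only [G, hu1, Set.mem_ofPred_eq, zero_smul, sub_zero, q_smul_l, q_smul_r]
      exact mul_ne_zero hw (mul_ne_zero hw hu2.ne')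
    obtain ⟨_, hv, c, z, rfl⟩ := mem_closure_iff.1 (int_dense u) _ ho hu
    refine ⟨qZ B0 w e • z - qZ B0 z e • w, ?_⟩
    have hf : intVec (qZ B0 w e • z - qZ B0 z e • w) = G (intVec z) := by
      simp only [G, hBdef, ← qZ_cast]
      ext i
      simp [intVec]
    rw [hf]
    constructor
    · rw [q_comm hB]
      simp only [G, q_sub_l, q_smul_l]
      ring
    · intro h
      apply hv
      have : G (c • intVec z) = c • G (intVec z) := by
        simp only [G, q_smul_l, smul_sub, smul_smul]
        rw [mul_comm]
      rw [this, q_smul_l, q_smul_r, h]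
      simp
  -- the transvections
  let f2 : Fin n → ℤ := 2 • f
  have hf2 : intVec f2 = (2 : ℝ) • intVec f := by
    ext i; simp [intVec, f2]
  let h : ℤ := 2 * qZ B0 f f
  have hh : (h : ℝ) = 2 * qForm B (intVec f) (intVec f) := by
    simp [h, qZ_cast, hBdef]
  have hh0 : (h : ℝ) ≠ 0 := by rw [hh]; exact mul_ne_zero two_ne_zero hff
  have hf2f2 : qForm B (intVec f2) (intVec f2) = 2 * h := by
    rw [hf2, q_smul_l, q_smul_r, hh]
  have hef2 : qForm B (intVec e) (intVec f2) = 0 := by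
    rw [hf2, q_smul_r, hef, mul_zero]
  have hf2e : qForm B (intVec f2) (intVec e) = 0 := by rw [q_comm hB, hef2]
  let P : ℕ → Matrix (Fin n) (Fin n) ℤ := fun k => trv B0 e f2 h k
  have hPv : ∀ k v, rm (P k) *ᵥ v = v + (k : ℝ) • (qForm B (intVec e) v • intVec f2 -
      qForm B (intVec f2) v • intVec e) -
      ((k : ℝ) ^ 2 * h * qForm B (intVec e) v) • intVec e := by
    intro k v
    have := trv_apply hB e f2 h k v
    simpa using this
  have hpres : ∀ k, (rm (P k))ᵀ * B * rm (P k) = B := by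
    intro k
    apply form_ext
    intro v w
    rw [← q_mulVec, hPv, hPv]
    simp only [q_add_l, q_add_r, q_sub_l, q_sub_r, q_smul_l, q_smul_r, he, hef2, hf2e, hf2f2,
      q_comm hB v (intVec e), q_comm hB v (intVec f2)]
    ring
  let U : Ultrafilter ℕ := Filter.hyperfilter ℕ
  have hU : (U : Filter ℕ) ≤ Filter.atTop := by
    rw [← Nat.cofinite_eq_atTop]; exact Filter.hyperfilter_le_cofinite
  have hlim : ∀ y, Filter.Tendsto (fun k : ℕ => (((k : ℝ) ^ 2)⁻¹) • (rm (P k) *ᵥ y)) U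
      (nhds ((((-(h : ℝ)) • (B *ᵥ intVec e)) ⬝ᵥ y) • intVec e)) := by
    intro y
    have t1 : Filter.Tendsto (fun k : ℕ => ((k : ℝ))⁻¹) U (nhds 0) :=
      tendsto_inv_atTop_nhds_zero_nat.mono_left hU
    have t2 : Filter.Tendsto (fun k : ℕ => (((k : ℝ))⁻¹ ^ 2) • y +
        ((k : ℝ))⁻¹ • (qForm B (intVec e) y • intVec f2 - qForm B (intVec f2) y • intVec e) -
        (h * qForm B (intVec e) y) • intVec e) U (nhds (((0 : ℝ) ^ 2) • y +
        (0 : ℝ) • (qForm B (intVec e) y • intVec f2 - qForm B (intVec f2) y • intVec e) -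
        (h * qForm B (intVec e) y) • intVec e)) :=
      (((t1.pow 2).smul_const y).add (t1.smul_const _)).sub tendsto_const_nhds
    have e1 : ((0 : ℝ) ^ 2) • y +
        (0 : ℝ) • (qForm B (intVec e) y • intVec f2 - qForm B (intVec f2) y • intVec e) -
        (h * qForm B (intVec e) y) • intVec e =
        (((-(h : ℝ)) • (B *ᵥ intVec e)) ⬝ᵥ y) • intVec e := by
      rw [smul_dotProduct, dotProduct_comm, show y ⬝ᵥ B *ᵥ intVec e = qForm B y (intVec e) from rfl,
        q_comm hB y]
      simp
    rw [← e1]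
    refine t2.congr' ?_
    have : ∀ᶠ k : ℕ in U, k ≠ 0 := hU (Filter.eventually_ne_atTop 0)
    filter_upwards [this] with k hk
    have hk' : (k : ℝ) ≠ 0 := by exact_mod_cast hk
    rw [hPv]
    ext i
    simp only [Pi.add_apply, Pi.sub_apply, Pi.smul_apply, smul_eq_mul]
    field_simp
  obtain ⟨s, hs, hsy⟩ := key_limit hdet O Γ hO hfin U P (Filter.Eventually.of_forall hpres) _ _ _ hlim
  have hPe : rm (P s) *ᵥ intVec e = intVec e := by
    rw [hPv]; simp [he, hf2e]
  have hdetP : IsUnit (rm (P s)).det := by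
    have := det_sq_of_pres hdet hs
    rw [isUnit_iff_ne_zero]
    intro h0
    rw [h0] at this
    norm_num at this
  have hl : rm (P s) *ᵥ ((rm (P s))⁻¹ *ᵥ l) = l := by
    rw [mulVec_mulVec, Matrix.mul_nonsing_inv _ hdetP, one_mulVec]
  have hy := hsy ((rm (P s))⁻¹ *ᵥ l)
  rw [hl] at hy
  apply hy
  rw [smul_dotProduct, dotProduct_comm]
  refine mul_ne_zero (neg_ne_zero.2 hh0) ?_
  change qForm B _ _ ≠ 0
  rw [q_comm hB]
  have := q_mulVec (B := B) (rm (P s)) (intVec e) ((rm (P s))⁻¹ *ᵥ l)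
  rw [hl, hPe, hs] at this
  rw [← this]
  exact hel

theorem limit_of_isotropic {B0 : Matrix (Fin n) (Fin n) ℤ} (hB : (rm B0).IsSymm)
    (hdet : (rm B0).det ≠ 0)
    (hP : ∀ x : Fin n → ℝ, ∃ u, qForm (rm B0) u x = 0 ∧ 0 < qForm (rm B0) u u)
    (O Γ : Subgroup (Matrix (Fin n) (Fin n) ℤ)ˣ)
    (hO : ∀ P : (Matrix (Fin n) (Fin n) ℤ)ˣ, P ∈ O ↔
      (rm (P : Matrix (Fin n) (Fin n) ℤ))ᵀ * (rm B0) * (rm (P : Matrix (Fin n) (Fin n) ℤ)) = rm B0)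
    (hfin : (Γ.subgroupOf O).index ≠ 0)
    (l : Fin n → ℝ) (hl : l ≠ 0) (e : Fin n → ℤ) (he0 : e ≠ 0)
    (he : qForm (rm B0) (intVec e) (intVec e) = 0)
    (x : Fin n → ℝ) (hx0 : x ≠ 0) (hx : qForm (rm B0) x x = 0) :
    x ∈ closure (orb Γ l) := by
  refine closure_minimal ?_ isClosed_closure
    (perturb_two hB hdet hP hx0 hx (intVec_ne he0) hl)
  rintro x ⟨hx, hxe, hxl⟩
  set B := rm B0 with hBdef
  let F : (Fin n → ℝ) → (Fin n → ℝ) := fun v =>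
    qForm B v v • intVec e - (2 * qForm B (intVec e) v) • v
  have hF : Continuous F := by
    have h1 : Continuous fun v : Fin n → ℝ => qForm B v v := q_cont continuous_id continuous_id
    have h2 : Continuous fun v : Fin n → ℝ => qForm B (intVec e) v :=
      q_cont continuous_const continuous_id
    fun_prop
  have hFx : F (x - intVec e) = (-2 * qForm B x (intVec e)) • x := by
    simp only [F, q_sub_l, q_sub_r, hx, he, q_comm hB (intVec e) x]
    module
  have ho : IsOpen {v | qForm B (F v) l ≠ 0} :=
    isOpen_ne_fun (q_cont hF continuous_const) continuous_const
  have hm : x - intVec e ∈ {v | qForm B (F v) l ≠ 0} := by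
    simp only [Set.mem_ofPred_eq, hFx, q_smul_l]
    exact mul_ne_zero (mul_ne_zero (by norm_num) hxe) hxl
  have h1 := ho.inter_closure ⟨hm, int_dense (x - intVec e)⟩
  have h2 : F (x - intVec e) ∈ closure (closure (orb Γ l)) := by
    refine map_mem_closure hF h1 ?_
    rintro _ ⟨hv, c, z, rfl⟩
    have hFz : F (c • intVec z) = (c ^ 2) • F (intVec z) := by
      simp only [F, q_smul_l, q_smul_r]
      module
    have hz : F (intVec z) = intVec (qZ B0 z z • e - (2 * qZ B0 e z) • z) := by
      simp only [F, hBdef, ← qZ_cast]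
      ext i
      simp [intVec]
    rw [hFz]
    apply closure_orb_smul
    have hv' : qForm B (F (intVec z)) l ≠ 0 := by
      intro h0
      apply hv
      rw [hFz, q_smul_l, h0, mul_zero]
    have hiso : qForm B (F (intVec z)) (F (intVec z)) = 0 := by
      simp only [F, q_sub_l, q_sub_r, q_smul_l, q_smul_r, he, q_comm hB (intVec z) (intVec e)]
      ring
    rw [hz] at hv' hiso ⊢
    exact isotropic_int_limit hB hdet hP O Γ hO hfin l _ hiso hv'
  rw [closure_closure, hFx] at h2
  have h3 := closure_orb_smul h2 (-2 * qForm B x (intVec e))⁻¹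
  rwa [smul_smul, inv_mul_cancel₀ (mul_ne_zero (by norm_num) hxe), one_smul] at h3


/-! ### Minkowski's theorem and bounded systems of independent lattice vectors -/

theorem mink (M : Matrix (Fin n) (Fin n) ℝ) (hM : M.det ^ 2 = 1) (c : Fin n → ℝ)
    (hc : ∀ i, 0 < c i) (hprod : 1 < ∏ i, c i) :
    ∃ z : Fin n → ℤ, z ≠ 0 ∧ ∀ i, |(M *ᵥ intVec z) i| < c i := by
  have habs : |M.det| = 1 := by
    rw [← sq_abs] at hM
    nlinarith [abs_nonneg M.det]
  have hdet : LinearMap.det (Matrix.toLin' M) ≠ 0 := by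
    rw [LinearMap.det_toLin']
    intro h
    rw [h] at habs
    simp at habs
  let box : Set (Fin n → ℝ) := Set.pi Set.univ fun i => Set.Ioo (-c i) (c i)
  let s : Set (Fin n → ℝ) := (Matrix.toLin' M) ⁻¹' box
  have hvol : MeasureTheory.volume s = ENNReal.ofReal (∏ i, (2 * c i)) := by
    rw [MeasureTheory.Measure.addHaar_preimage_linearMap _ hdet, LinearMap.det_toLin', abs_inv,
      habs]
    simp only [box, Real.volume_pi_Ioo]
    rw [ENNReal.ofReal_prod_of_nonneg (fun i _ => by have := hc i; positivity)]
    simp only [inv_one, ENNReal.ofReal_one, one_mul]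
    refine Finset.prod_congr rfl fun i _ => ?_
    congr 1
    ring
  have hconv : Convex ℝ s :=
    (convex_pi fun i _ => convex_Ioo _ _).linear_preimage _
  have hsymm : ∀ x ∈ s, -x ∈ s := by
    intro x hx
    simp only [s, box, Set.mem_preimage, Set.mem_pi, Set.mem_univ, true_imp_iff, Set.mem_Ioo,
      map_neg, Pi.neg_apply] at hx ⊢
    intro i
    have := hx i
    constructor <;> linarith
  let b := Pi.basisFun ℝ (Fin n)
  have hF : MeasureTheory.volume (ZSpan.fundamentalDomain b) = 1 := by
    rw [ZSpan.fundamentalDomain_pi_basisFun, Real.volume_pi_Ico]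
    simp
  have : Countable (Submodule.span ℤ (Set.range b)).toAddSubgroup :=
    inferInstanceAs (Countable (Submodule.span ℤ (Set.range b)))
  have hlt : MeasureTheory.volume (ZSpan.fundamentalDomain b) *
      2 ^ Module.finrank ℝ (Fin n → ℝ) < MeasureTheory.volume s := by
    rw [hF, hvol, one_mul, Module.finrank_fin_fun, Finset.prod_mul_distrib]
    simp only [Finset.prod_const, Finset.card_univ, Fintype.card_fin]
    rw [show (2 : ENNReal) ^ n = ENNReal.ofReal (2 ^ n) by
      rw [ENNReal.ofReal_pow (by norm_num)]; simp]
    apply (ENNReal.ofReal_lt_ofReal_iff _).2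
    · have : (0 : ℝ) < 2 ^ n := by positivity
      nlinarith
    · have : (0 : ℝ) < 2 ^ n := by positivity
      nlinarith
  obtain ⟨⟨x, hxL⟩, hx0, hxs⟩ :=
    MeasureTheory.exists_ne_zero_mem_lattice_of_measure_mul_two_pow_lt_measure
      (ZSpan.isAddFundamentalDomain' b MeasureTheory.volume) hsymm hconv hlt
  have hrep := (b.mem_span_iff_repr_mem ℤ x).1 hxL
  choose z hz using hrep
  have hzx : intVec z = x := by
    ext i
    have := hz i
    simpa [b, intVec] using this
  refine ⟨z, ?_, ?_⟩
  · rintro rfl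
    apply hx0
    apply Subtype.ext
    change x = 0
    rw [← hzx]
    ext i
    simp [intVec]
  · intro i
    rw [hzx, abs_lt]
    have := hxs
    simp only [s, box, Set.mem_preimage, Set.mem_pi, Set.mem_univ, true_imp_iff, Set.mem_Ioo,
      Matrix.toLin'_apply] at this
    exact this i

theorem short_basis (n : ℕ) (ε : ℝ) (hε : 0 < ε) : ∃ R : ℝ, ∀ G : Matrix (Fin n) (Fin n) ℝ,
    G.det ^ 2 = 1 → (∀ z : Fin n → ℤ, z ≠ 0 → ∃ i, ε ≤ |(G *ᵥ intVec z) i|) →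
    ∃ N : Matrix (Fin n) (Fin n) ℤ, N.det ≠ 0 ∧ ∀ i j, |(G * rm N) i j| ≤ R := by
  let δ : ℝ := ε / (2 * (n + 1))
  have hδ : 0 < δ := by positivity
  have hnδ : (n + 1) * δ < ε := by
    have : (n + 1) * δ = ε / 2 := by simp only [δ]; field_simp
    linarith
  have hnδ' : n * δ < ε := by linarith
  have hδε : δ < ε := by
    have : 0 ≤ n * δ := by positivity
    linarith
  let s : ℝ := 2 / δ ^ (n - 1)
  have hs : 0 < s := by positivity
  refine ⟨s + (n + 1) * δ, fun G hG hshort => ?_⟩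
  set R := s + (n + 1) * δ with hR
  let T : Set (Fin n → ℝ) := {v | ∃ z : Fin n → ℤ, v = G *ᵥ intVec z ∧ ∀ i, |v i| ≤ R}
  have hspan : Submodule.span ℝ T = ⊤ := by
    by_contra hne
    obtain ⟨f, hf0, hf⟩ := Submodule.exists_le_ker_of_lt_top _ (lt_top_iff_ne_top.2 hne)
    let a : Fin n → ℝ := fun i => f (Pi.single i 1)
    have hfa : ∀ v, f v = ∑ i, a i * v i := by
      intro v
      conv_lhs => rw [← Finset.univ_sum_single v]
      rw [map_sum]
      refine Finset.sum_congr rfl fun i _ => ?_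
      have : (Pi.single i (v i) : Fin n → ℝ) = v i • Pi.single i 1 := by
        ext k
        by_cases hk : k = i
        · subst hk; simp
        · simp [hk]
      rw [this, map_smul, smul_eq_mul, mul_comm]
    have hne : ∃ i, a i ≠ 0 := by
      by_contra hcon
      push Not at hcon
      apply hf0
      ext v
      simpa [a] using hcon v
    obtain ⟨i0, hi0⟩ := hne
    obtain ⟨j, -, hj⟩ := Finset.exists_max_image Finset.univ (fun i => |a i|) ⟨i0, Finset.mem_univ _⟩
    have haj : a j ≠ 0 := by
      have h1 := hj i0 (Finset.mem_univ _)
      have h2 := abs_pos.2 hi0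
      exact abs_pos.1 (lt_of_lt_of_le h2 h1)
    let b : Fin n → ℝ := fun i => a i / a j
    have hb1 : ∀ i, |b i| ≤ 1 := by
      intro i
      simp only [b, abs_div]
      exact div_le_one_of_le₀ (hj i (Finset.mem_univ _)) (abs_nonneg _)
    have hbj : b j = 1 := div_self haj
    let S : Matrix (Fin n) (Fin n) ℝ := updateRow 1 j b
    have hS : S.det = 1 := by
      have h1 := det_updateRow_sum (1 : Matrix (Fin n) (Fin n) ℝ) j b
      have h2 : (∑ k, b k • (1 : Matrix (Fin n) (Fin n) ℝ) k) = b := by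
        ext i
        simp [Finset.sum_apply, Matrix.one_apply]
      rw [h2] at h1
      simpa [hbj] using h1
    let c : Fin n → ℝ := Function.update (fun _ => δ) j s
    have hc : ∀ i, 0 < c i := by
      intro i
      by_cases hi : i = j
      · subst hi; simpa [c] using hs
      · simpa [c, hi] using hδ
    have hprod : 1 < ∏ i, c i := by
      have : ∏ i, c i = s * δ ^ (n - 1) := by
        simp only [c]
        rw [Finset.prod_update_of_mem (Finset.mem_univ j)]
        simp [Finset.card_sdiff]
      rw [this]
      simp only [s]
      rw [div_mul_cancel₀ _ (by positivity)]
      norm_num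
    obtain ⟨z, hz0, hz⟩ := mink (S * G) (by rw [det_mul, hS, one_mul, hG]) c hc hprod
    set v := G *ᵥ intVec z with hv
    have hv1 : ∀ i, i ≠ j → |v i| < δ := by
      intro i hi
      have := hz i
      rw [← mulVec_mulVec, ← hv] at this
      have h3 : (S *ᵥ v) i = v i := by
        simp [S, mulVec, updateRow_ne hi, dotProduct, Matrix.one_apply]
      rw [h3] at this
      simpa [c, hi] using this
    have hv2 : |∑ i, b i * v i| < s := by
      have := hz j
      rw [← mulVec_mulVec, ← hv] at this
      have h3 : (S *ᵥ v) j = ∑ i, b i * v i := by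
        simp [S, mulVec, dotProduct]
      rw [h3] at this
      simpa [c] using this
    have hsplit : ∑ i, b i * v i = v j + ∑ i ∈ Finset.univ.erase j, b i * v i := by
      rw [← Finset.add_sum_erase _ _ (Finset.mem_univ j), hbj, one_mul]
    have hrest : |∑ i ∈ Finset.univ.erase j, b i * v i| ≤ n * δ := by
      calc |∑ i ∈ Finset.univ.erase j, b i * v i|
          ≤ ∑ i ∈ Finset.univ.erase j, |b i * v i| := Finset.abs_sum_le_sum_abs _ _
        _ ≤ ∑ i ∈ Finset.univ.erase j, δ := by
            refine Finset.sum_le_sum fun i hi => ?_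
            rw [abs_mul]
            have h1 := hb1 i
            have h2 := hv1 i (Finset.ne_of_mem_erase hi)
            have h3 := abs_nonneg (v i)
            nlinarith
        _ ≤ n * δ := by
            rw [Finset.sum_const, nsmul_eq_mul]
            gcongr
            exact (Finset.card_le_univ _).trans (by simp)
    have hT : v ∈ T := by
      refine ⟨z, hv, fun i => ?_⟩
      by_cases hi : i = j
      · subst hi
        have e : v i = ∑ k, b k * v k - ∑ k ∈ Finset.univ.erase i, b k * v k := by
          rw [hsplit]; ring
        rw [e]
        refine (abs_sub _ _).trans ?_
        rw [hR]
        linarith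
      · have := hv1 i hi
        have : 0 ≤ n * δ := by positivity
        rw [hR]
        linarith
    have hfv : f v = 0 := hf (Submodule.subset_span hT)
    have hb0 : ∑ i, b i * v i = 0 := by
      have : ∑ i, b i * v i = f v / a j := by
        rw [hfa, Finset.sum_div]
        refine Finset.sum_congr rfl fun i _ => ?_
        simp only [b]; ring
      rw [this, hfv, zero_div]
    obtain ⟨i, hi⟩ := hshort z hz0
    rw [← hv] at hi
    by_cases hij : i = j
    · subst hij
      rw [hb0] at hsplit
      have : v i = -∑ k ∈ Finset.univ.erase i, b k * v k := by linarith
      rw [this, abs_neg] at hi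
      linarith
    · have := hv1 i hij
      linarith
  let b0 := Module.Basis.ofSpan hspan.ge
  have hb0 : ∀ i, b0 i ∈ T := fun i => Module.Basis.ofSpan_subset hspan.ge ⟨i, rfl⟩
  let b := b0.reindex (b0.indexEquiv (Pi.basisFun ℝ (Fin n)))
  have hb : ∀ i, b i ∈ T := by
    intro i
    simp only [b, Module.Basis.reindex_apply]
    exact hb0 _
  choose z hz hzR using hb
  let N : Matrix (Fin n) (Fin n) ℤ := Matrix.of fun i j => z j i
  have hcol : ∀ i j, (G * rm N) i j = b j i := by
    intro i j
    rw [hz j]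
    simp [Matrix.mul_apply, mulVec, dotProduct, rm, N, intVec]
  refine ⟨N, ?_, fun i j => by rw [hcol]; exact hzR j i⟩
  have hu : IsUnit (G * rm N) := by
    rw [← linearIndependent_cols_iff_isUnit]
    have : (G * rm N).col = b := by
      ext j i
      exact hcol i j
    rw [this]
    exact b.linearIndependent
  rw [isUnit_iff_isUnit_det, det_mul, rm_det, isUnit_iff_ne_zero] at hu
  intro h
  rw [h] at hu
  simp at hu


/-! ### Anisotropic forms -/

/-- The hyperbolic boost along the isotropic pair `x, x2`. -/
noncomputable def boost (B : Matrix (Fin n) (Fin n) ℝ) (x x2 : Fin n → ℝ) (t : ℝ) :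
    Matrix (Fin n) (Fin n) ℝ :=
  1 + (t⁻¹ - 1) • vecMulVec x (B *ᵥ x2) + (t - 1) • vecMulVec x2 (B *ᵥ x)

theorem boost_apply (B : Matrix (Fin n) (Fin n) ℝ) (x x2 : Fin n → ℝ) (t : ℝ) (v : Fin n → ℝ) :
    boost B x x2 t *ᵥ v = v + ((t⁻¹ - 1) * qForm B v x2) • x + ((t - 1) * qForm B v x) • x2 := by
  simp only [boost, add_mulVec, one_mulVec, smul_mulVec, vecMulVec_mulVec, qForm]
  ext i
  simp [dotProduct_comm v]
  ring

theorem boost_pres {B : Matrix (Fin n) (Fin n) ℝ} (hB : B.IsSymm) {x x2 : Fin n → ℝ}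
    (hx : qForm B x x = 0) (hx2 : qForm B x2 x2 = 0) (h12 : qForm B x x2 = 1) {t : ℝ}
    (ht : t ≠ 0) : (boost B x x2 t)ᵀ * B * boost B x x2 t = B := by
  apply form_ext
  intro v w
  rw [← q_mulVec, boost_apply, boost_apply]
  have h21 : qForm B x2 x = 1 := by rw [q_comm hB, h12]
  simp only [q_add_l, q_add_r, q_smul_l, q_smul_r, hx, hx2, h12, h21, q_comm hB x, q_comm hB x2]
  field_simp
  ring

theorem boost_inv {B : Matrix (Fin n) (Fin n) ℝ} (hB : B.IsSymm) {x x2 : Fin n → ℝ}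
    (hx : qForm B x x = 0) (hx2 : qForm B x2 x2 = 0) (h12 : qForm B x x2 = 1) {t : ℝ}
    (ht : t ≠ 0) (v : Fin n → ℝ) : boost B x x2 t⁻¹ *ᵥ (boost B x x2 t *ᵥ v) = v := by
  rw [boost_apply, boost_apply]
  have h21 : qForm B x2 x = 1 := by rw [q_comm hB, h12]
  simp only [q_add_l, q_smul_l, hx, hx2, h12, h21]
  ext i
  simp only [Pi.add_apply, Pi.smul_apply, smul_eq_mul]
  field_simp
  ring

theorem q_bound (B : Matrix (Fin n) (Fin n) ℝ) (v : Fin n → ℝ) (ε : ℝ) (hv : ∀ i, |v i| ≤ ε) :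
    |qForm B v v| ≤ (∑ i, ∑ j, |B i j|) * ε ^ 2 := by
  have e : qForm B v v = ∑ i, ∑ j, v i * B i j * v j := by
    simp [qForm, dotProduct, mulVec, Finset.mul_sum, mul_assoc]
  rw [e, Finset.sum_mul]
  refine (Finset.abs_sum_le_sum_abs _ _).trans (Finset.sum_le_sum fun i _ => ?_)
  rw [Finset.sum_mul]
  refine (Finset.abs_sum_le_sum_abs _ _).trans (Finset.sum_le_sum fun j _ => ?_)
  rw [abs_mul, abs_mul]
  have h1 := hv i
  have h2 := hv j
  have h3 := abs_nonneg (v i)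
  have h4 := abs_nonneg (v j)
  have : |v i| * |v j| ≤ ε ^ 2 := by nlinarith
  have h5 := abs_nonneg (B i j)
  nlinarith

theorem mahler_limit {B0 : Matrix (Fin n) (Fin n) ℤ}
    (hdet : (rm B0).det ≠ 0)
    (han : ∀ e : Fin n → ℤ, e ≠ 0 → qForm (rm B0) (intVec e) (intVec e) ≠ 0)
    (U : Ultrafilter ℕ) (G : ℕ → Matrix (Fin n) (Fin n) ℝ)
    (hG : ∀ k, (G k)ᵀ * rm B0 * G k = rm B0) :
    ∃ P : ℕ → Matrix (Fin n) (Fin n) ℤ, ∃ A0 : Matrix (Fin n) (Fin n) ℝ,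
      (∀ᶠ k in (U : Filter ℕ), (rm (P k))ᵀ * rm B0 * rm (P k) = rm B0) ∧
      Filter.Tendsto (fun k => G k * rm (P k)) U (nhds A0) := by
  let C : ℝ := ∑ i, ∑ j, |rm B0 i j|
  have hC : 0 ≤ C := Finset.sum_nonneg fun i _ => Finset.sum_nonneg fun j _ => abs_nonneg _
  let ε : ℝ := 1 / (C + 1)
  have hε : 0 < ε := by positivity
  have hCε : C * ε ^ 2 < 1 := by
    simp only [ε]
    rw [div_pow, one_pow, mul_one_div, div_lt_one (by positivity)]
    nlinarith
  obtain ⟨R, hR⟩ := short_basis n ε hε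
  have hN : ∀ k, ∃ N : Matrix (Fin n) (Fin n) ℤ, N.det ≠ 0 ∧ ∀ i j, |(G k * rm N) i j| ≤ R := by
    intro k
    refine hR (G k) (det_sq_of_pres hdet (hG k)) fun z hz => ?_
    by_contra hcon
    push Not at hcon
    have h1 := q_bound (rm B0) _ ε (fun i => (hcon i).le)
    rw [q_mulVec, hG k, ← qZ_cast] at h1
    have h2 := han z hz
    rw [← qZ_cast] at h2
    have h3 : (1 : ℤ) ≤ |qZ B0 z z| := Int.one_le_abs (by exact_mod_cast h2)
    have h4 : (1 : ℝ) ≤ |((qZ B0 z z : ℤ) : ℝ)| := by exact_mod_cast h3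
    linarith
  choose N hN0 hNR using hN
  let K : Set (Matrix (Fin n) (Fin n) ℝ) :=
    Set.pi Set.univ fun _ => Set.pi Set.univ fun _ => Set.Icc (-R) R
  have hK : IsCompact K := isCompact_univ_pi fun _ => isCompact_univ_pi fun _ => isCompact_Icc
  obtain ⟨M0, -, hM0⟩ := hK.ultrafilter_le_nhds (U.map fun k => G k * rm (N k)) (by
    rw [Filter.le_principal_iff]
    change ∀ᶠ k in (U : Filter ℕ), G k * rm (N k) ∈ K
    refine Filter.Eventually.of_forall fun k => ?_
    intro i _ j _
    exact abs_le.1 (hNR k i j))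
  have hM : Filter.Tendsto (fun k => G k * rm (N k)) U (nhds M0) := hM0
  have hgram : ∀ k, (G k * rm (N k))ᵀ * rm B0 * (G k * rm (N k)) = rm ((N k)ᵀ * B0 * N k) := by
    intro k
    rw [rm_mul, rm_mul, rm_transpose, transpose_mul]
    conv_rhs => rw [← hG k]
    simp only [Matrix.mul_assoc]
  have hA : Filter.Tendsto (fun k => rm ((N k)ᵀ * B0 * N k)) U (nhds (M0ᵀ * rm B0 * M0)) := by
    simp only [← hgram]
    have hcont : Continuous fun M : Matrix (Fin n) (Fin n) ℝ => Mᵀ * rm B0 * M := by fun_prop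
    exact (hcont.tendsto M0).comp hM
  have hclose : ∀ᶠ k in (U : Filter ℕ), ∀ i j,
      |rm ((N k)ᵀ * B0 * N k) i j - (M0ᵀ * rm B0 * M0) i j| < 1 / 2 := by
    rw [Filter.eventually_all]
    intro i
    rw [Filter.eventually_all]
    intro j
    have h1 := (tendsto_pi_nhds.1 ((tendsto_pi_nhds.1 hA) i)) j
    have h2 := (Metric.tendsto_nhds.1 h1) (1 / 2) (by norm_num)
    simpa [Real.dist_eq] using h2
  have heq : ∀ k s, (∀ i j, |rm ((N k)ᵀ * B0 * N k) i j - (M0ᵀ * rm B0 * M0) i j| < 1 / 2) →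
      (∀ i j, |rm ((N s)ᵀ * B0 * N s) i j - (M0ᵀ * rm B0 * M0) i j| < 1 / 2) →
      (N k)ᵀ * B0 * N k = (N s)ᵀ * B0 * N s := by
    intro k s hk hs
    ext i j
    have h1 := abs_lt.1 (hk i j)
    have h2 := abs_lt.1 (hs i j)
    simp only [rm, Matrix.map_apply] at h1 h2
    have h3 : (((N k)ᵀ * B0 * N k) i j : ℝ) < ((N s)ᵀ * B0 * N s) i j + 1 := by linarith
    have h4 : (((N s)ᵀ * B0 * N s) i j : ℝ) < ((N k)ᵀ * B0 * N k) i j + 1 := by linarith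
    have h5 : ((N k)ᵀ * B0 * N k) i j < ((N s)ᵀ * B0 * N s) i j + 1 := by exact_mod_cast h3
    have h6 : ((N s)ᵀ * B0 * N s) i j < ((N k)ᵀ * B0 * N k) i j + 1 := by exact_mod_cast h4
    omega
  have hB0 : B0.det ≠ 0 := by
    intro h
    rw [rm_det, h] at hdet
    simp at hdet
  have hdets : ∀ k s, (N k)ᵀ * B0 * N k = (N s)ᵀ * B0 * N s → (N k).det ^ 2 = (N s).det ^ 2 := by
    intro k s h
    have := congrArg Matrix.det h
    simp only [det_mul, det_transpose] at this
    apply mul_right_cancel₀ hB0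
    linear_combination this
  obtain ⟨s0, hs0⟩ := hclose.exists
  let D : ℕ := ((N s0).det ^ 2).natAbs
  have hD : D ≠ 0 := Int.natAbs_ne_zero.2 (pow_ne_zero _ (hN0 s0))
  have hDD : (D : ℤ) = (N s0).det ^ 2 := Int.natAbs_of_nonneg (sq_nonneg _)
  have : NeZero D := ⟨hD⟩
  obtain ⟨a, ha⟩ := ultra_const U (fun k => (fun i j => ((N k i j : ℤ) : ZMod D) :
    Fin n → Fin n → ZMod D))
  obtain ⟨s, hs1, hs2⟩ := (hclose.and ha).exists
  have hPex : ∀ k, ∃ P : Matrix (Fin n) (Fin n) ℤ,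
      (fun i j => ((N k i j : ℤ) : ZMod D) : Fin n → Fin n → ZMod D) = a → P * N s = N k := by
    intro k
    by_cases hk : (fun i j => ((N k i j : ℤ) : ZMod D) : Fin n → Fin n → ZMod D) = a
    swap
    · exact ⟨0, fun h => absurd h hk⟩
    have h1 : ∀ i j, ∃ x : ℤ, N k i j = N s i j + D * x := by
      intro i j
      have h2 := congrFun (congrFun (hs2.trans hk.symm) i) j
      have h3 := (ZMod.intCast_eq_intCast_iff_dvd_sub _ _ D).1 h2
      obtain ⟨x, hx⟩ := h3
      exact ⟨x, by linarith⟩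
    choose X hX using h1
    refine ⟨1 + (N s).det • ((Matrix.of X) * (N s).adjugate), fun _ => ?_⟩
    have h4 : (N s).det ^ 2 = D := by rw [hDD]; exact hdets _ _ (heq _ _ hs1 hs0)
    rw [add_mul, one_mul, smul_mul_assoc, Matrix.mul_assoc, adjugate_mul, Matrix.mul_smul,
      Matrix.mul_one, smul_smul]
    ext i j
    rw [hX i j, ← h4]
    simp [pow_two]
  choose P hP using hPex
  have hsu : IsUnit (rm (N s)).det := by
    rw [rm_det, isUnit_iff_ne_zero]
    exact_mod_cast hN0 s
  refine ⟨P, M0 * (rm (N s))⁻¹, ?_, ?_⟩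
  · filter_upwards [hclose, ha] with k hk1 hk2
    have h1 := heq k s hk1 hs1
    rw [← hP k hk2] at h1
    have h2 := congrArg rm h1
    rw [transpose_mul] at h2
    simp only [rm_mul, rm_transpose] at h2
    have hsu' : IsUnit (rm (N s))ᵀ.det := by rwa [det_transpose]
    have h3 : (rm (N s))ᵀ * ((rm (P k))ᵀ * rm B0 * rm (P k)) * rm (N s) =
        (rm (N s))ᵀ * rm B0 * rm (N s) := by
      rw [← h2]
      simp only [Matrix.mul_assoc]
    have h4 := congrArg (fun M => ((rm (N s))ᵀ)⁻¹ * (M * (rm (N s))⁻¹)) h3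
    simp only [mul_nonsing_inv_cancel_right _ _ hsu, nonsing_inv_mul_cancel_left _ _ hsu'] at h4
    exact h4
  · have h1 : Filter.Tendsto (fun k => (G k * rm (N k)) * (rm (N s))⁻¹) U
        (nhds (M0 * (rm (N s))⁻¹)) := by
      have hcont : Continuous fun M : Matrix (Fin n) (Fin n) ℝ => M * (rm (N s))⁻¹ := by fun_prop
      exact (hcont.tendsto M0).comp hM
    refine h1.congr' ?_
    filter_upwards [ha] with k hk
    rw [← hP k hk, rm_mul, ← Matrix.mul_assoc, mul_nonsing_inv_cancel_right _ _ hsu]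


theorem aniso_limit {B0 : Matrix (Fin n) (Fin n) ℤ} (hB : (rm B0).IsSymm)
    (hdet : (rm B0).det ≠ 0)
    (han : ∀ e : Fin n → ℤ, e ≠ 0 → qForm (rm B0) (intVec e) (intVec e) ≠ 0)
    (O Γ : Subgroup (Matrix (Fin n) (Fin n) ℤ)ˣ)
    (hO : ∀ P : (Matrix (Fin n) (Fin n) ℤ)ˣ, P ∈ O ↔
      (rm (P : Matrix (Fin n) (Fin n) ℤ))ᵀ * (rm B0) * (rm (P : Matrix (Fin n) (Fin n) ℤ)) = rm B0)
    (hfin : (Γ.subgroupOf O).index ≠ 0)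
    {x : Fin n → ℝ} (hx0 : x ≠ 0) (hx : qForm (rm B0) x x = 0) :
    ∃ ψ : Fin n → ℝ, ψ ≠ 0 ∧ ∀ y, ψ ⬝ᵥ y ≠ 0 → x ∈ closure (orb Γ y) := by
  set B := rm B0 with hBdef
  obtain ⟨w, hw⟩ := q_nondeg hB hdet hx0
  obtain ⟨x2, h12, hx2⟩ : ∃ x2, qForm B x x2 = 1 ∧ qForm B x2 x2 = 0 := by
    refine ⟨w - (qForm B w w / 2) • x, ?_, ?_⟩
    · simp [q_sub_r, q_smul_r, hx, hw]
    · simp only [q_sub_l, q_sub_r, q_smul_l, q_smul_r, hx, hw, q_comm hB w x]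
      ring
  let U : Ultrafilter ℕ := Filter.hyperfilter ℕ
  have hU : (U : Filter ℕ) ≤ Filter.atTop := by
    rw [← Nat.cofinite_eq_atTop]; exact Filter.hyperfilter_le_cofinite
  let t : ℕ → ℝ := fun k => (k : ℝ) + 1
  have ht : ∀ k, t k ≠ 0 := fun k => by
    have : (0 : ℝ) < t k := by positivity
    exact this.ne'
  obtain ⟨P, A0, hP, hlim⟩ := mahler_limit hdet han U (fun k => boost B x x2 (t k))
    (fun k => boost_pres hB hx hx2 h12 (ht k))
  have hA0 : A0ᵀ * B * A0 = B := by
    have hcont : Continuous fun M : Matrix (Fin n) (Fin n) ℝ => Mᵀ * B * M := by fun_prop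
    have h1 := (hcont.tendsto A0).comp hlim
    refine tendsto_nhds_unique h1 ?_
    refine tendsto_const_nhds.congr' ?_
    filter_upwards [hP] with k hk
    have h2 := boost_pres hB hx hx2 h12 (ht k)
    simp only [Function.comp, transpose_mul]
    rw [← hBdef] at hk
    calc B = (rm (P k))ᵀ * ((boost B x x2 (t k))ᵀ * B * boost B x x2 (t k)) * rm (P k) := by
            rw [h2, hk]
      _ = _ := by simp only [Matrix.mul_assoc]
  have hA0u : IsUnit A0.det := by
    have := det_sq_of_pres hdet hA0
    rw [isUnit_iff_ne_zero]
    intro h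
    rw [h] at this
    norm_num at this
  let φ : Fin n → ℝ := A0ᵀ *ᵥ (B *ᵥ x2)
  have hφ : ∀ y, φ ⬝ᵥ y = qForm B (A0 *ᵥ y) x2 := by
    intro y
    simp only [φ, qForm]
    rw [mulVec_transpose, ← dotProduct_mulVec, dotProduct_comm]
  have htinv : Filter.Tendsto (fun k => (t k)⁻¹) U (nhds 0) := by
    have h1 : Filter.Tendsto t Filter.atTop Filter.atTop :=
      Filter.tendsto_atTop_add_const_right _ _ tendsto_natCast_atTop_atTop
    exact (tendsto_inv_atTop_zero.comp h1).mono_left hU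
  have hlim2 : ∀ y, Filter.Tendsto (fun k => (t k)⁻¹ • (rm (P k) *ᵥ y)) U
      (nhds ((φ ⬝ᵥ y) • x)) := by
    intro y
    let v : ℕ → Fin n → ℝ := fun k => (boost B x x2 (t k) * rm (P k)) *ᵥ y
    have hv : Filter.Tendsto v U (nhds (A0 *ᵥ y)) := by
      have hcont : Continuous fun M : Matrix (Fin n) (Fin n) ℝ => M *ᵥ y := by fun_prop
      exact (hcont.tendsto A0).comp hlim
    let F : ℝ × (Fin n → ℝ) → (Fin n → ℝ) := fun p => p.1 • p.2 +
      ((1 - p.1) * qForm B p.2 x2) • x + (p.1 * (p.1 - 1) * qForm B p.2 x) • x2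
    have hF : Continuous F := by
      have h1 : Continuous fun p : ℝ × (Fin n → ℝ) => qForm B p.2 x2 :=
        q_cont continuous_snd continuous_const
      have h2 : Continuous fun p : ℝ × (Fin n → ℝ) => qForm B p.2 x :=
        q_cont continuous_snd continuous_const
      fun_prop
    have h1 : Filter.Tendsto (fun k => F ((t k)⁻¹, v k)) U (nhds (F (0, A0 *ᵥ y))) :=
      (hF.tendsto _).comp (htinv.prodMk_nhds hv)
    have h2 : F (0, A0 *ᵥ y) = (φ ⬝ᵥ y) • x := by
      simp [F, hφ]
    rw [h2] at h1
    refine h1.congr fun k => ?_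
    have h3 : rm (P k) *ᵥ y = boost B x x2 (t k)⁻¹ *ᵥ v k := by
      simp only [v]
      rw [← mulVec_mulVec, boost_inv hB hx hx2 h12 (ht k)]
    rw [h3, boost_apply]
    have := ht k
    ext i
    simp only [F, Pi.add_apply, Pi.smul_apply, smul_eq_mul, inv_inv]
    field_simp
  obtain ⟨s, hs, hfinal⟩ := key_limit hdet O Γ hO hfin U P hP _ x φ hlim2
  have hPu : IsUnit (rm (P s)).det := by
    have := det_sq_of_pres hdet hs
    rw [isUnit_iff_ne_zero]
    intro h
    rw [h] at this
    norm_num at this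
  refine ⟨φ ᵥ* (rm (P s))⁻¹, ?_, ?_⟩
  · intro h
    have h1 : φ ⬝ᵥ (A0⁻¹ *ᵥ x) = 1 := by
      rw [hφ, mulVec_mulVec, mul_nonsing_inv _ hA0u, one_mulVec, h12]
    have h2 : φ = 0 := by
      have := congrArg (fun z => z ᵥ* rm (P s)) h
      simpa [vecMul_vecMul, nonsing_inv_mul _ hPu] using this
    rw [h2] at h1
    simp at h1
  · intro y hy
    rw [← dotProduct_mulVec] at hy
    have := hfinal _ hy
    rwa [mulVec_mulVec, mul_nonsing_inv _ hPu, one_mulVec] at this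

/-- The real vector of a rational vector. -/
def rq (v : Fin n → ℚ) : Fin n → ℝ := fun i => (v i : ℝ)

theorem rq_add (v w : Fin n → ℚ) : rq (v + w) = rq v + rq w := by
  ext i; simp [rq]

theorem rq_smul (c : ℚ) (v : Fin n → ℚ) : rq (c • v) = (c : ℝ) • rq v := by
  ext i; simp [rq]

theorem rq_zero : rq (0 : Fin n → ℚ) = 0 := by
  ext i; simp [rq]

/-- The rational bilinear form of an integer matrix. -/
noncomputable def bq (B0 : Matrix (Fin n) (Fin n) ℤ) : LinearMap.BilinForm ℚ (Fin n → ℚ) :=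
  Matrix.toBilin' (B0.map (Int.cast : ℤ → ℚ))

theorem bq_cast (B0 : Matrix (Fin n) (Fin n) ℤ) (v w : Fin n → ℚ) :
    ((bq B0 v w : ℚ) : ℝ) = qForm (rm B0) (rq v) (rq w) := by
  simp [bq, Matrix.toBilin'_apply', qForm, rq, rm, dotProduct, mulVec]

theorem limit_of_anisotropic {B0 : Matrix (Fin n) (Fin n) ℤ} (hB : (rm B0).IsSymm)
    (hdet : (rm B0).det ≠ 0)
    (hP : ∀ x : Fin n → ℝ, ∃ u, qForm (rm B0) u x = 0 ∧ 0 < qForm (rm B0) u u)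
    (han : ∀ e : Fin n → ℤ, e ≠ 0 → qForm (rm B0) (intVec e) (intVec e) ≠ 0)
    (O Γ : Subgroup (Matrix (Fin n) (Fin n) ℤ)ˣ)
    (hO : ∀ P : (Matrix (Fin n) (Fin n) ℤ)ˣ, P ∈ O ↔
      (rm (P : Matrix (Fin n) (Fin n) ℤ))ᵀ * (rm B0) * (rm (P : Matrix (Fin n) (Fin n) ℤ)) = rm B0)
    (hΓO : Γ ≤ O) (hfin : (Γ.subgroupOf O).index ≠ 0) (l : Fin n → ℤ) (hl : l ≠ 0)
    {x : Fin n → ℝ} (hx0 : x ≠ 0) (hx : qForm (rm B0) x x = 0) :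
    x ∈ closure (orb Γ (intVec l)) := by
  obtain ⟨ψ, hψ0, hψ⟩ := aniso_limit hB hdet han O Γ hO hfin hx0 hx
  suffices h : ∃ δ ∈ Γ, ψ ⬝ᵥ (rm (δ : Matrix (Fin n) (Fin n) ℤ) *ᵥ intVec l) ≠ 0 by
    obtain ⟨δ, hδ, h⟩ := h
    exact closure_mono (orb_mul hδ) (hψ _ h)
  by_contra hcon
  push Not at hcon
  set B := rm B0 with hBdef
  let T : Set (Fin n → ℚ) := {y | ∃ γ ∈ Γ, rq y = rm (γ : Matrix (Fin n) (Fin n) ℤ) *ᵥ intVec l}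
  have hTmem : ∀ γ ∈ Γ, ∃ y ∈ T, rq y = rm (γ : Matrix (Fin n) (Fin n) ℤ) *ᵥ intVec l := by
    intro γ hγ
    have h1 : rq (fun i => (((γ : Matrix (Fin n) (Fin n) ℤ) *ᵥ l) i : ℚ)) =
        rm (γ : Matrix (Fin n) (Fin n) ℤ) *ᵥ intVec l := by
      rw [← rm_intVec]
      ext i
      simp [rq, intVec]
    exact ⟨_, ⟨γ, hγ, h1⟩, h1⟩
  let W : Submodule ℚ (Fin n → ℚ) := Submodule.span ℚ T
  have hWtop : W ≠ ⊤ := by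
    intro h
    apply hψ0
    have h1 : ∀ y ∈ W, ψ ⬝ᵥ rq y = 0 := by
      intro y hy
      induction hy using Submodule.span_induction with
      | mem y hy =>
        obtain ⟨γ, hγ, e⟩ := hy
        rw [e]; exact hcon γ hγ
      | zero => simp [rq_zero]
      | add a b _ _ ha hb => rw [rq_add, dotProduct_add, ha, hb, add_zero]
      | smul c a _ ha => rw [rq_smul, dotProduct_smul, ha, smul_zero]
    ext i
    have h2 := h1 (Pi.single i 1) (by rw [h]; trivial)
    have h3 : rq (Pi.single i 1 : Fin n → ℚ) = Pi.single i 1 := by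
      ext j
      by_cases hj : j = i
      · subst hj; simp [rq]
      · simp [rq, hj]
    rw [h3] at h2
    simpa using h2
  have hanq : ∀ v : Fin n → ℚ, bq B0 v v = 0 → v = 0 := by
    intro v hv
    obtain ⟨D, hD, z, hz⟩ := rat_clear v
    have hzv : intVec z = (D : ℝ) • rq v := by
      ext i
      have := hz i
      have h2 : (((D : ℚ) * v i : ℚ) : ℝ) = ((z i : ℚ) : ℝ) := by rw [this]
      push_cast at h2
      simp [intVec, rq, h2]
    by_contra hv0
    have hz0 : z ≠ 0 := by
      rintro rfl
      apply hv0
      ext i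
      have := hz i
      simpa [hD] using this
    apply han z hz0
    rw [hzv, q_smul_l, q_smul_r, hBdef, ← bq_cast, hv]
    simp
  have hsymm : ∀ v w, bq B0 v w = bq B0 w v := by
    intro v w
    have : ((bq B0 v w : ℚ) : ℝ) = ((bq B0 w v : ℚ) : ℝ) := by
      rw [bq_cast, bq_cast, q_comm hB]
    exact_mod_cast this
  have hrefl : (bq B0).IsRefl := fun v w h => by rw [hsymm, h]
  have hcompl : IsCompl W ((bq B0).orthogonal W) := by
    rw [LinearMap.BilinForm.isCompl_orthogonal_iff_disjoint hrefl, Submodule.disjoint_def]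
    intro v hv hv'
    exact hanq v (hv' v hv)
  have hperp : ∀ v ∈ W, ∀ w ∈ (bq B0).orthogonal W, qForm B (rq v) (rq w) = 0 := by
    intro v hv w hw
    rw [hBdef, ← bq_cast]
    have : bq B0 v w = 0 := hw v hv
    rw [this]; simp
  have hWbot : (bq B0).orthogonal W ≠ ⊥ := by
    intro h
    rw [h] at hcompl
    exact hWtop (by simpa using hcompl.sup_eq_top)
  obtain ⟨w, hwW, hw0⟩ := Submodule.exists_mem_ne_zero_of_ne_bot hWbot
  have hrw0 : rq w ≠ 0 := by
    intro h
    apply hw0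
    ext i
    have := congrFun h i
    simpa [rq] using this
  obtain ⟨x', hx', hx'l, hx'w⟩ : ({y | qForm B y y = 0 ∧ qForm B y (intVec l) ≠ 0 ∧
      qForm B y (rq w) ≠ 0}).Nonempty :=
    closure_nonempty_iff.1 ⟨x, perturb_two hB hdet hP hx0 hx (intVec_ne hl) hrw0⟩
  have hx'0 : x' ≠ 0 := by
    rintro rfl
    exact hx'l (q_zero_l B _)
  obtain ⟨ψ', hψ'0, hψ'⟩ := aniso_limit hB hdet han O Γ hO hfin hx'0 hx'
  obtain ⟨i, hi⟩ := Function.ne_iff.1 hψ'0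
  have hclosed : ∀ y z : Fin n → ℝ, (∀ γ ∈ Γ,
      qForm B (rm (γ : Matrix (Fin n) (Fin n) ℤ) *ᵥ y) z = 0) → ψ' ⬝ᵥ y ≠ 0 →
      qForm B x' z = 0 := by
    intro y z h hy
    have h1 := hψ' y hy
    have h2 : IsClosed {v | qForm B v z = 0} :=
      isClosed_eq (q_cont continuous_id continuous_const) continuous_const
    refine closure_minimal ?_ h2 h1
    rintro _ ⟨c, γ, hγ, rfl⟩
    simp only [Set.mem_ofPred_eq, q_smul_l, h γ hγ, mul_zero]
  have hW0 : ∀ u ∈ W, ψ' ⬝ᵥ rq u = 0 := by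
    intro u hu
    by_contra hne
    refine hx'w (hclosed _ _ ?_ hne)
    intro γ hγ
    clear hne
    induction hu using Submodule.span_induction with
    | mem y hy =>
      obtain ⟨δ, hδ, e⟩ := hy
      obtain ⟨y', hy', e'⟩ := hTmem (γ * δ) (Γ.mul_mem hγ hδ)
      rw [e, mulVec_mulVec, ← rm_mul, ← Units.val_mul, ← e']
      exact hperp _ (Submodule.subset_span hy') _ hwW
    | zero => rw [rq_zero, mulVec_zero, q_zero_l]
    | add a b _ _ ha hb => rw [rq_add, mulVec_add, q_add_l, ha, hb, add_zero]
    | smul c a _ ha => rw [rq_smul, mulVec_smul, q_smul_l, ha, mul_zero]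
  have hW1 : ∀ u ∈ (bq B0).orthogonal W, ψ' ⬝ᵥ rq u = 0 := by
    intro u hu
    by_contra hne
    refine hx'l (hclosed _ _ ?_ hne)
    intro γ hγ
    have h1 : intVec l = rm (γ : Matrix (Fin n) (Fin n) ℤ) *ᵥ
        (rm ((γ⁻¹ : (Matrix (Fin n) (Fin n) ℤ)ˣ) : Matrix (Fin n) (Fin n) ℤ) *ᵥ intVec l) := by
      rw [mulVec_mulVec, ← rm_mul, ← Units.val_mul]
      simp [rm_one]
    obtain ⟨y', hy', e'⟩ := hTmem γ⁻¹ (Γ.inv_mem hγ)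
    rw [h1, q_mulVec, (hO γ).1 (hΓO hγ), ← e', q_comm hB]
    exact hperp _ (Submodule.subset_span hy') _ hu
  have h3 : rq (Pi.single i 1 : Fin n → ℚ) = Pi.single i 1 := by
    ext j
    by_cases hj : j = i
    · subst hj; simp [rq]
    · simp [rq, hj]
  have h4 : (Pi.single i 1 : Fin n → ℚ) ∈ W ⊔ (bq B0).orthogonal W := by
    rw [hcompl.sup_eq_top]; trivial
  obtain ⟨a, ha, b, hb, hab⟩ := Submodule.mem_sup.1 h4
  apply hi
  have h5 : ψ' ⬝ᵥ rq (a + b) = 0 := by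
    rw [rq_add, dotProduct_add, hW0 a ha, hW1 b hb, add_zero]
  rw [hab, h3] at h5
  simpa using h5

/-- **Anan'in–Verbitsky, Proposition 3.2.** Let `V = ℝⁿ` carry a
nondegenerate symmetric bilinear form of signature `(s₊, s₋)` with `s₊ ≥ 3`,
`s₋ ≥ 1`, integral on the lattice `L = ℤⁿ`, let `Γ` be a finite-index subgroup of
`O(L)`, and `l ∈ L` a nonzero vector.  Then `⋃_{γ ∈ Γ} Gr₊₊((γl)^⊥)` is dense in
the Grassmannian `Gr₊₊(V)` of positive 2-planes (stated here at the level of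
spanning pairs of vectors). -/
theorem dense_positive_planes_orthogonal_to_orbit
    (B : Matrix (Fin n) (Fin n) ℝ) (hB : B.IsSymm) (hdet : B.det ≠ 0)
    (hint : ∀ v w : Fin n → ℤ, ∃ k : ℤ, qForm B (intVec v) (intVec w) = (k : ℝ))
    (sp sm : ℕ) (hsp : 3 ≤ sp) (hsm : 1 ≤ sm) (hsum : sp + sm = n)
    (Wp Wm : Submodule ℝ (Fin n → ℝ))
    (hWp : Module.finrank ℝ Wp = sp) (hWm : Module.finrank ℝ Wm = sm)
    (hspan : Wp ⊔ Wm = ⊤)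
    (hpos : ∀ x ∈ Wp, x ≠ 0 → 0 < qForm B x x)
    (hneg : ∀ x ∈ Wm, x ≠ 0 → qForm B x x < 0)
    (O Γ : Subgroup (Matrix (Fin n) (Fin n) ℤ)ˣ)
    (hO : ∀ P : (Matrix (Fin n) (Fin n) ℤ)ˣ, P ∈ O ↔
      ((P : Matrix (Fin n) (Fin n) ℤ).map (Int.cast : ℤ → ℝ))ᵀ * B *
        ((P : Matrix (Fin n) (Fin n) ℤ).map (Int.cast : ℤ → ℝ)) = B)
    (hΓO : Γ ≤ O) (hfin : (Γ.subgroupOf O).index ≠ 0)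
    (l : Fin n → ℤ) (hl : l ≠ 0) :
    ∀ p : (Fin n → ℝ) × (Fin n → ℝ), SpansPosPlane B p →
      p ∈ closure {p' : (Fin n → ℝ) × (Fin n → ℝ) | SpansPosPlane B p' ∧
        ∃ P ∈ Γ, qForm B p'.1 (intVec ((P : Matrix (Fin n) (Fin n) ℤ).mulVec l)) = 0 ∧
          qForm B p'.2 (intVec ((P : Matrix (Fin n) (Fin n) ℤ).mulVec l)) = 0} := by
  have hsing : ∀ i : Fin n, intVec (Pi.single i 1 : Fin n → ℤ) = Pi.single i 1 := by
    intro i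
    ext j
    by_cases hj : j = i
    · subst hj; simp [intVec]
    · simp [intVec, hj]
  obtain ⟨B0, rfl⟩ : ∃ B0 : Matrix (Fin n) (Fin n) ℤ, B = rm B0 := by
    have h1 : ∀ i j, ∃ k : ℤ, B i j = k := by
      intro i j
      obtain ⟨k, hk⟩ := hint (Pi.single i 1) (Pi.single j 1)
      refine ⟨k, ?_⟩
      rw [hsing, hsing] at hk
      simpa [qForm] using hk
    choose k hk using h1
    refine ⟨Matrix.of k, ?_⟩
    ext i j
    simp [rm, hk]
  have hP2 : ∀ x y : Fin n → ℝ, ∃ u, qForm (rm B0) u x = 0 ∧ qForm (rm B0) u y = 0 ∧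
      0 < qForm (rm B0) u u := by
    intro x y
    let f : Wp →ₗ[ℝ] ℝ × ℝ :=
      { toFun := fun u => (qForm (rm B0) u x, qForm (rm B0) u y)
        map_add' := fun u v => by simp [q_add_l]
        map_smul' := fun c v => by simp [q_smul_l] }
    have hf : LinearMap.ker f ≠ ⊥ := by
      apply LinearMap.ker_ne_bot_of_finrank_lt
      rw [hWp, Module.finrank_prod, Module.finrank_self]
      omega
    obtain ⟨u, hu, hu0⟩ := Submodule.exists_mem_ne_zero_of_ne_bot hf
    have h1 : (qForm (rm B0) u x, qForm (rm B0) u y) = ((0, 0) : ℝ × ℝ) := hu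
    rw [Prod.mk.injEq] at h1
    exact ⟨u, h1.1, h1.2, hpos u u.2 (fun h => hu0 (Subtype.ext h))⟩
  have hP : ∀ x : Fin n → ℝ, ∃ u, qForm (rm B0) u x = 0 ∧ 0 < qForm (rm B0) u u := by
    intro x
    obtain ⟨u, h1, -, h2⟩ := hP2 x x
    exact ⟨u, h1, h2⟩
  obtain ⟨w, hw⟩ : ∃ w, qForm (rm B0) w w < 0 := by
    have h1 : Wm ≠ ⊥ := by
      rintro rfl
      rw [finrank_bot] at hWm
      omega
    obtain ⟨w, hw, hw0⟩ := Submodule.exists_mem_ne_zero_of_ne_bot h1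
    exact ⟨w, hneg w hw hw0⟩
  intro p hp
  obtain ⟨x, hx0, hx, hx1, hx2⟩ := exists_isotropic_perp hB hP2 hw p hp
  have hcl : x ∈ closure (orb Γ (intVec l)) := by
    by_cases hiso : ∃ e : Fin n → ℤ, e ≠ 0 ∧ qForm (rm B0) (intVec e) (intVec e) = 0
    · obtain ⟨e, he0, he⟩ := hiso
      exact limit_of_isotropic hB hdet hP O Γ hO hfin (intVec l) (intVec_ne hl) e he0 he x hx0 hx
    · push Not at hiso
      exact limit_of_anisotropic hB hdet hP hiso O Γ hO hΓO hfin l hl hx0 hx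
  refine closure_mono ?_ (approx_plane hB hdet _ p hp hx0 hx1 hx2 hcl)
  rintro p' ⟨hp', y, ⟨c, γ, hγ, rfl⟩, hy0, h1, h2⟩
  have hc : c ≠ 0 := by
    rintro rfl
    exact hy0 (zero_smul _ _)
  refine ⟨hp', γ, hγ, ?_, ?_⟩
  · rw [q_smul_r, ← rm_intVec] at h1
    exact (mul_eq_zero.1 h1).resolve_left hc
  · rw [q_smul_r, ← rm_intVec] at h2
    exact (mul_eq_zero.1 h2).resolve_left hc
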